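/- (Counter of translations) For every acLL formula C, the counter satisfies ♮(Ĉ) = 0 and ♮(Ĉ⊥) = 1, where Ĉ is the positive translation of C and Ĉ⊥ its De Morgan dual. -/

import Mathlib

set_option autoImplicit false

namespace NACLL

/-- Structures: binary trees whose leaves are formulas, with an empty structure.
`(∅,Γ)` and `(Γ,∅)` are identified with `Γ` via the smart constructor `comma`. -/
inductive Struct (F : Type) : Type where
  | emp : Struct F
  | leaf : F → Struct F
  | pair : Struct F → Struct F → Struct F

namespace Struct

/-- Pairing of structures, erasing empty substructures. -/
def comma {F : Type} : Struct F → Struct F → Struct F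
  | .emp, Δ => Δ
  | Γ, .emp => Γ
  | Γ, Δ => .pair Γ Δ

def map {F G : Type} (f : F → G) : Struct F → Struct G
  | .emp => .emp
  | .leaf a => .leaf (f a)
  | .pair l r => .pair (map f l) (map f r)

/-- Number of formula leaves of a structure. -/
def nleaves {F : Type} : Struct F → ℕ
  | .emp => 0
  | .leaf _ => 1
  | .pair l r => nleaves l + nleaves r

/-- All formula leaves of a structure satisfy a predicate. -/
def Forall {F : Type} (p : F → Prop) : Struct F → Prop
  | .emp => True
  | .leaf a => p a
  | .pair l r => Forall p l ∧ Forall p r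

end Struct

/-- Structural equivalence: the reflexive, symmetric, transitive closure of
top-level exchange and top-level associativity. -/
inductive StEquiv {F : Type} : Struct F → Struct F → Prop where
  | refl (Γ : Struct F) : StEquiv Γ Γ
  | symm {Γ Δ : Struct F} : StEquiv Γ Δ → StEquiv Δ Γ
  | trans {Γ Δ Θ : Struct F} : StEquiv Γ Δ → StEquiv Δ Θ → StEquiv Γ Θ
  | exch (Γ Δ : Struct F) : StEquiv (Γ.comma Δ) (Δ.comma Γ)
  | assoc (Γ Δ Θ : Struct F) : StEquiv (Γ.comma (Δ.comma Θ)) ((Γ.comma Δ).comma Θ)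

/-- Contexts with one hole. -/
inductive Ctx (F : Type) : Type where
  | hole : Ctx F
  | pairL : Ctx F → Struct F → Ctx F
  | pairR : Struct F → Ctx F → Ctx F

namespace Ctx

/-- Filling the hole of a context with a structure (empty substructures are erased). -/
def fill {F : Type} : Ctx F → Struct F → Struct F
  | .hole, Ξ => Ξ
  | .pairL R Δ, Ξ => (fill R Ξ).comma Δ
  | .pairR Γ R, Ξ => Γ.comma (fill R Ξ)

/-- A context viewed as a structure over `Option F`, the hole being the leaf `none`. -/
def toStruct {F : Type} : Ctx F → Struct (Option F)
  | .hole => .leaf none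
  | .pairL R Δ => (toStruct R).comma (Δ.map some)
  | .pairR Γ R => (Γ.map some).comma (toStruct R)

def size {F : Type} : Ctx F → ℕ
  | .hole => 0
  | .pairL R _ => size R + 2
  | .pairR _ R => size R + 1

/-- The designator. -/
def desi {F : Type} : Ctx F → Struct F
  | .hole => .emp
  | .pairL R Δ => desi (.pairR Δ R)
  | .pairR Γ .hole => Γ
  | .pairR Γ (.pairR Δ P) => desi (.pairR (Γ.comma Δ) P)
  | .pairR Γ (.pairL D Θp) => desi (.pairR (Θp.comma Γ) D)
termination_by c => size c
decreasing_by all_goals simp [size]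

/-- All formula leaves of a context (other than the hole) satisfy a predicate. -/
def Forall {F : Type} (p : F → Prop) : Ctx F → Prop
  | .hole => True
  | .pairL R Δ => Forall p R ∧ Δ.Forall p
  | .pairR Γ R => Γ.Forall p ∧ Forall p R

end Ctx

/-- Structural equivalence of one-hole contexts, treating the hole as a leaf. -/
def CtxEquiv {F : Type} (T X : Ctx F) : Prop := StEquiv T.toStruct X.toStruct

/-- Contexts with two holes (the first hole is the designated one). -/
inductive Ctx2 (F : Type) : Type where
  | splitLR : Ctx F → Ctx F → Ctx2 F
  | splitRL : Ctx F → Ctx F → Ctx2 F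
  | pairL : Ctx2 F → Struct F → Ctx2 F
  | pairR : Struct F → Ctx2 F → Ctx2 F

namespace Ctx2

/-- Filling the first hole of a two-hole context, yielding a one-hole context. -/
def fillFst {F : Type} : Ctx2 F → Struct F → Ctx F
  | .splitLR c1 c2, Δ => .pairR (c1.fill Δ) c2
  | .splitRL c2 c1, Δ => .pairL c2 (c1.fill Δ)
  | .pairL R Γ, Δ => .pairL (fillFst R Δ) Γ
  | .pairR Γ R, Δ => .pairR Γ (fillFst R Δ)

end Ctx2

end NACLL
namespace NACLL

/-- Structural axioms that a subexponential may license. -/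
inductive SubAx : Type where
  | C : SubAx
  | W : SubAx
  | E : SubAx
  | A1 : SubAx
  | A2 : SubAx
deriving DecidableEq

/-- A subexponential signature: a preordered set of indices together with an
upwardly closed assignment of licensed structural axioms. -/
structure Sig (I : Type) where
  le : I → I → Prop
  le_refl : ∀ i, le i i
  le_trans : ∀ {i j k}, le i j → le j k → le i k
  f : I → Set SubAx
  upclosed : ∀ {i j}, le i j → f i ⊆ f j

/-- Formulas of classical non-associative non-commutative multimodal linear logic. -/
inductive CForm (I : Type) : Type where
  | pos : ℕ → CForm I
  | neg : ℕ → CForm I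
  | tensor : CForm I → CForm I → CForm I
  | par : CForm I → CForm I → CForm I
  | one : CForm I
  | bot : CForm I
  | oplus : CForm I → CForm I → CForm I
  | with' : CForm I → CForm I → CForm I
  | zero : CForm I
  | top : CForm I
  | bang : I → CForm I → CForm I
  | quest : I → CForm I → CForm I

namespace CForm

/-- De Morgan dual, pushed to atomic scope (order-reversing on the multiplicatives). -/
def dual {I : Type} : CForm I → CForm I
  | .pos a => .neg a
  | .neg a => .pos a
  | .tensor A B => .par (dual B) (dual A)
  | .par A B => .tensor (dual B) (dual A)
  | .one => .bot
  | .bot => .one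
  | .oplus A B => .with' (dual A) (dual B)
  | .with' A B => .oplus (dual A) (dual B)
  | .zero => .top
  | .top => .zero
  | .bang i A => .quest i (dual A)
  | .quest i A => .bang i (dual A)

/-- The counter ♮ on formulas. -/
def counter {I : Type} : CForm I → ℤ
  | .pos _ => 0
  | .neg _ => 1
  | .tensor A B => counter A + counter B
  | .par A B => counter A + counter B - 1
  | .one => 0
  | .bot => 1
  | .oplus A _ => counter A
  | .with' A _ => counter A
  | .zero => 1
  | .top => 0
  | .bang _ A => counter A
  | .quest _ A => counter A

end CForm

/-- The counter ♮ extended to structures. -/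
def Struct.counter {I : Type} : Struct (CForm I) → ℤ
  | .emp => 0
  | .leaf A => A.counter
  | .pair l r => counter l + counter r

/-- All leaves of a (nonempty) structure are `?ᵏ`-formulas whose label licenses
the given structural axiom. -/
inductive QAll {I : Type} (σ : Sig I) (ax : SubAx) : Struct (CForm I) → Prop where
  | leaf {k : I} {F : CForm I} (h : ax ∈ σ.f k) : QAll σ ax (.leaf (.quest k F))
  | pair {Γ Δ : Struct (CForm I)} : QAll σ ax Γ → QAll σ ax Δ → QAll σ ax (.pair Γ Δ)

/-- `UpSet σ i Γ Γ'` holds iff `Γ^{↑i}` is defined and equal to `Γ'`: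
every leaf of `Γ` is a `?ᵏ`-formula which is kept when `i ⪯ k` and erased when
`i ⋠ k` and `W ∈ f(k)`. -/
inductive UpSet {I : Type} (σ : Sig I) (i : I) : Struct (CForm I) → Struct (CForm I) → Prop where
  | emp : UpSet σ i .emp .emp
  | keep {k : I} {F : CForm I} (h : σ.le i k) :
      UpSet σ i (.leaf (.quest k F)) (.leaf (.quest k F))
  | drop {k : I} {F : CForm I} (h1 : ¬ σ.le i k) (h2 : SubAx.W ∈ σ.f k) :
      UpSet σ i (.leaf (.quest k F)) .emp
  | pair {Γ Γ' Δ Δ' : Struct (CForm I)} :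
      UpSet σ i Γ Γ' → UpSet σ i Δ Δ' → UpSet σ i (.pair Γ Δ) (Γ'.comma Δ')

/-- Structures over `Option F` serve as multi-hole contexts: `none`-leaves are
holes. `fillAll T D` fills every hole with `D` (erasing empty substructures). -/
def fillAll {F : Type} : Struct (Option F) → Struct F → Struct F
  | .emp, _ => .emp
  | .leaf (some a), _ => .leaf a
  | .leaf none, D => D
  | .pair l r, D => (fillAll l D).comma (fillAll r D)

/-- Derivability in the one-sided classical sequent calculus CacLL over the
signature `σ`.  The Boolean flag indicates whether the cut rule may be used:
`CDer σ false` is cut-free CacLL, `CDer σ true` is CacLL extended with cut. -/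
inductive CDer {I : Type} (σ : Sig I) : Bool → Struct (CForm I) → Prop where
  | initP {b : Bool} (a : ℕ) :
      CDer σ b (.pair (.leaf (.pos a)) (.leaf (.neg a)))
  | initN {b : Bool} (a : ℕ) :
      CDer σ b (.pair (.leaf (.neg a)) (.leaf (.pos a)))
  | tensor {b : Bool} {Γ Δ : Struct (CForm I)} {F G : CForm I} :
      CDer σ b (Γ.comma (.leaf G)) → CDer σ b (Δ.comma (.leaf F)) →
      CDer σ b ((Γ.comma Δ).comma (.leaf (.tensor F G)))
  | par {b : Bool} (R : Ctx (CForm I)) {F G : CForm I} :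
      CDer σ b (R.fill (.pair (.leaf F) (.leaf G))) →
      CDer σ b (R.fill (.leaf (.par F G)))
  | oplus₁ {b : Bool} (R : Ctx (CForm I)) {F1 F2 : CForm I} :
      CDer σ b (R.fill (.leaf F1)) → CDer σ b (R.fill (.leaf (.oplus F1 F2)))
  | oplus₂ {b : Bool} (R : Ctx (CForm I)) {F1 F2 : CForm I} :
      CDer σ b (R.fill (.leaf F2)) → CDer σ b (R.fill (.leaf (.oplus F1 F2)))
  | with' {b : Bool} (R : Ctx (CForm I)) {F1 F2 : CForm I} :
      CDer σ b (R.fill (.leaf F1)) → CDer σ b (R.fill (.leaf F2)) →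
      CDer σ b (R.fill (.leaf (.with' F1 F2)))
  | bot {b : Bool} (R : Ctx (CForm I)) :
      CDer σ b (R.fill .emp) → CDer σ b (R.fill (.leaf .bot))
  | one {b : Bool} : CDer σ b (.leaf .one)
  | top {b : Bool} (R : Ctx (CForm I)) : CDer σ b (R.fill (.leaf .top))
  | exch {b : Bool} {Γ Δ : Struct (CForm I)} :
      CDer σ b (Δ.comma Γ) → CDer σ b (Γ.comma Δ)
  | assoc₁ {b : Bool} {Γ Δ Θ : Struct (CForm I)} :
      CDer σ b (Γ.comma (Δ.comma Θ)) → CDer σ b ((Γ.comma Δ).comma Θ)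
  | assoc₂ {b : Bool} {Γ Δ Θ : Struct (CForm I)} :
      CDer σ b ((Γ.comma Δ).comma Θ) → CDer σ b (Γ.comma (Δ.comma Θ))
  | prom {b : Bool} {Γ Γ' : Struct (CForm I)} {i : I} {F : CForm I} :
      UpSet σ i Γ Γ' → CDer σ b (Γ'.comma (.leaf F)) →
      CDer σ b (Γ.comma (.leaf (.bang i F)))
  | der {b : Bool} (R : Ctx (CForm I)) {i : I} {F : CForm I} :
      CDer σ b (R.fill (.leaf F)) → CDer σ b (R.fill (.leaf (.quest i F)))
  | qA1 {b : Bool} {Δ1 Δ2 Δ3 Γ : Struct (CForm I)} (h : QAll σ .A1 Γ) :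
      CDer σ b (((Δ1.comma Δ2).comma Δ3).comma Γ) →
      CDer σ b ((Δ1.comma (Δ2.comma Δ3)).comma Γ)
  | qA2 {b : Bool} {Δ1 Δ2 Δ3 Γ : Struct (CForm I)} (h : QAll σ .A2 Γ) :
      CDer σ b ((Δ1.comma (Δ2.comma Δ3)).comma Γ) →
      CDer σ b (((Δ1.comma Δ2).comma Δ3).comma Γ)
  | qE {b : Bool} {Δ1 Δ2 Γ : Struct (CForm I)} (h : QAll σ .E Γ) :
      CDer σ b ((Δ2.comma Δ1).comma Γ) → CDer σ b ((Δ1.comma Δ2).comma Γ)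
  | qW {b : Bool} (R : Ctx (CForm I)) {Δ : Struct (CForm I)} (h : QAll σ .W Δ) :
      CDer σ b (R.fill .emp) → CDer σ b (R.fill Δ)
  | qC {b : Bool} (R : Ctx2 (CForm I)) {Δ : Struct (CForm I)} (h : QAll σ .C Δ) :
      CDer σ b ((R.fillFst Δ).fill Δ) → CDer σ b ((R.fillFst .emp).fill Δ)
  | cut {Γ Δ : Struct (CForm I)} {A : CForm I} :
      CDer σ true (Γ.comma (.leaf A)) → CDer σ true ((Struct.leaf A.dual).comma Δ) →
      CDer σ true (Γ.comma Δ)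

end NACLL
namespace NACLL

/-- Formulas of intuitionistic non-associative non-commutative multimodal
linear logic (acLL). -/
inductive IForm (I : Type) : Type where
  | atom : ℕ → IForm I
  | tensor : IForm I → IForm I → IForm I
  | imp : IForm I → IForm I → IForm I    -- `imp A B` is A → B
  | limp : IForm I → IForm I → IForm I   -- `limp B A` is B ← A
  | oplus : IForm I → IForm I → IForm I
  | with' : IForm I → IForm I → IForm I
  | one : IForm I
  | top : IForm I
  | bang : I → IForm I → IForm I

/-- The positive translation of acLL formulas into CacLL formulas. -/
def IForm.pos {I : Type} : IForm I → CForm I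
  | .atom a => .pos a
  | .tensor A B => .tensor A.pos B.pos
  | .imp A B => .par A.pos.dual B.pos
  | .limp B A => .par B.pos A.pos.dual
  | .oplus A B => .oplus A.pos B.pos
  | .with' A B => .with' A.pos B.pos
  | .one => .one
  | .top => .top
  | .bang i A => .bang i A.pos

/-- The negative translation of structures of acLL formulas: it reverses the
order and takes the De Morgan dual of the positive translation on leaves. -/
def negTrans {I : Type} : Struct (IForm I) → Struct (CForm I)
  | .emp => .emp
  | .leaf A => .leaf A.pos.dual
  | .pair Γ Δ => (negTrans Δ).comma (negTrans Γ)

/-- All leaves of a (nonempty) structure are `!ᵏ`-formulas whose label licenses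
the given structural axiom. -/
inductive BAll {I : Type} (σ : Sig I) (ax : SubAx) : Struct (IForm I) → Prop where
  | leaf {k : I} {F : IForm I} (h : ax ∈ σ.f k) : BAll σ ax (.leaf (.bang k F))
  | pair {Γ Δ : Struct (IForm I)} : BAll σ ax Γ → BAll σ ax Δ → BAll σ ax (.pair Γ Δ)

/-- `IUpSet σ i Γ Γ'` holds iff `Γ^{↑i}` is defined and equal to `Γ'`. -/
inductive IUpSet {I : Type} (σ : Sig I) (i : I) : Struct (IForm I) → Struct (IForm I) → Prop where
  | emp : IUpSet σ i .emp .emp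
  | keep {k : I} {F : IForm I} (h : σ.le i k) :
      IUpSet σ i (.leaf (.bang k F)) (.leaf (.bang k F))
  | drop {k : I} {F : IForm I} (h1 : ¬ σ.le i k) (h2 : SubAx.W ∈ σ.f k) :
      IUpSet σ i (.leaf (.bang k F)) .emp
  | pair {Γ Γ' Δ Δ' : Struct (IForm I)} :
      IUpSet σ i Γ Γ' → IUpSet σ i Δ Δ' → IUpSet σ i (.pair Γ Δ) (Γ'.comma Δ')

/-- Derivability in the two-sided intuitionistic sequent calculus acLL over `σ`. -/
inductive IDer {I : Type} (σ : Sig I) : Struct (IForm I) → IForm I → Prop where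
  | init (A : IForm I) : IDer σ (.leaf A) A
  | tensorL (R : Ctx (IForm I)) {A B C : IForm I} :
      IDer σ (R.fill (.pair (.leaf A) (.leaf B))) C →
      IDer σ (R.fill (.leaf (.tensor A B))) C
  | tensorR {Γ Δ : Struct (IForm I)} {A B : IForm I} :
      IDer σ Γ A → IDer σ Δ B → IDer σ (Γ.comma Δ) (.tensor A B)
  | impL (R : Ctx (IForm I)) {Δ : Struct (IForm I)} {A B C : IForm I} :
      IDer σ Δ A → IDer σ (R.fill (.leaf B)) C →
      IDer σ (R.fill (Δ.comma (.leaf (.imp A B)))) C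
  | impR {Γ : Struct (IForm I)} {A B : IForm I} :
      IDer σ ((Struct.leaf A).comma Γ) B → IDer σ Γ (.imp A B)
  | limpL (R : Ctx (IForm I)) {Δ : Struct (IForm I)} {A B C : IForm I} :
      IDer σ Δ A → IDer σ (R.fill (.leaf B)) C →
      IDer σ (R.fill ((Struct.leaf (.limp B A)).comma Δ)) C
  | limpR {Γ : Struct (IForm I)} {A B : IForm I} :
      IDer σ (Γ.comma (.leaf A)) B → IDer σ Γ (.limp B A)
  | oplusL (R : Ctx (IForm I)) {A B C : IForm I} :
      IDer σ (R.fill (.leaf A)) C → IDer σ (R.fill (.leaf B)) C →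
      IDer σ (R.fill (.leaf (.oplus A B))) C
  | oplusR₁ {Γ : Struct (IForm I)} {A B : IForm I} : IDer σ Γ A → IDer σ Γ (.oplus A B)
  | oplusR₂ {Γ : Struct (IForm I)} {A B : IForm I} : IDer σ Γ B → IDer σ Γ (.oplus A B)
  | withL₁ (R : Ctx (IForm I)) {A B C : IForm I} :
      IDer σ (R.fill (.leaf A)) C → IDer σ (R.fill (.leaf (.with' A B))) C
  | withL₂ (R : Ctx (IForm I)) {A B C : IForm I} :
      IDer σ (R.fill (.leaf B)) C → IDer σ (R.fill (.leaf (.with' A B))) C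
  | withR {Γ : Struct (IForm I)} {A B : IForm I} :
      IDer σ Γ A → IDer σ Γ B → IDer σ Γ (.with' A B)
  | oneL (R : Ctx (IForm I)) {C : IForm I} :
      IDer σ (R.fill .emp) C → IDer σ (R.fill (.leaf .one)) C
  | oneR : IDer σ .emp .one
  | topR (Γ : Struct (IForm I)) : IDer σ Γ .top
  | prom {Γ Γ' : Struct (IForm I)} {i : I} {A : IForm I} :
      IUpSet σ i Γ Γ' → IDer σ Γ' A → IDer σ Γ (.bang i A)
  | der (R : Ctx (IForm I)) {i : I} {A C : IForm I} :
      IDer σ (R.fill (.leaf A)) C → IDer σ (R.fill (.leaf (.bang i A))) C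
  | wk (R : Ctx (IForm I)) {Δ : Struct (IForm I)} {C : IForm I} (h : BAll σ .W Δ) :
      IDer σ (R.fill .emp) C → IDer σ (R.fill Δ) C
  | ctr (R : Ctx2 (IForm I)) {Δ : Struct (IForm I)} {C : IForm I} (h : BAll σ .C Δ) :
      IDer σ ((R.fillFst Δ).fill Δ) C → IDer σ ((R.fillFst .emp).fill Δ) C
  | e1 (R : Ctx (IForm I)) {Δ Θ : Struct (IForm I)} {C : IForm I} (h : BAll σ .E Δ) :
      IDer σ (R.fill (Θ.comma Δ)) C → IDer σ (R.fill (Δ.comma Θ)) C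
  | e2 (R : Ctx (IForm I)) {Δ Θ : Struct (IForm I)} {C : IForm I} (h : BAll σ .E Δ) :
      IDer σ (R.fill (Δ.comma Θ)) C → IDer σ (R.fill (Θ.comma Δ)) C
  | a1 (R : Ctx (IForm I)) {Δ1 Δ2 Δ3 : Struct (IForm I)} {C : IForm I} (h : BAll σ .A1 Δ1) :
      IDer σ (R.fill ((Δ1.comma Δ2).comma Δ3)) C →
      IDer σ (R.fill (Δ1.comma (Δ2.comma Δ3))) C
  | a2 (R : Ctx (IForm I)) {Δ1 Δ2 Δ3 : Struct (IForm I)} {C : IForm I} (h : BAll σ .A2 Δ3) :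
      IDer σ (R.fill (Δ1.comma (Δ2.comma Δ3))) C →
      IDer σ (R.fill ((Δ1.comma Δ2).comma Δ3)) C

end NACLL

namespace NACLL

/-- The De Morgan dual is involutive. -/
theorem CForm.dual_dual_eq {I : Type} (A : CForm I) : A.dual.dual = A := by
  induction A <;> simp_all [CForm.dual]

/-- **Counter of translations.**  For every acLL formula `C`, `♮(Ĉ) = 0` and
`♮(Ĉ⊥) = 1`. -/
theorem counter_translation {I : Type} (C : IForm I) :
    C.pos.counter = 0 ∧ C.pos.dual.counter = 1 := by
  induction C <;> simp_all [IForm.pos, CForm.dual, CForm.counter, CForm.dual_dual_eq]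

end NACLL
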